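/- Let q = 2^h with 3 dividing h, so that F_8 = {x ∈ F_q : x^8 = x} is a subfield of F_q. Let α, β ∈ F_8 \ {0,1} with β ∉ {α, α+1}, and let S be a subgroup of (F_q,+) of order q/4. Assume S + αS = {x ∈ F_q : Tr(k₁x) = 0}, S + βS = {x ∈ F_q : Tr(k₂x) = 0}, αS + βS = {x ∈ F_q : Tr(k₃x) = 0} and (α+1)S + (β+1)S = {x ∈ F_q : Tr(k₄x) = 0} for certain pairwise distinct nonzero k₁, k₂, k₃, k₄ ∈ F_q. Then the system of equations Tr(k₁(X+α)) = 1, Tr(k₂(Y+β)) = 1, Tr(k₃(αY+βX)) = 1, Tr(k₄((α+β)+(β+1)X+(α+1)Y)) = 1 has no solution (X,Y) ∈ F_q². -/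

import Mathlib

open scoped Classical

noncomputable section

variable {K : Type*} [Field K]

/-- The absolute trace-style sum `x + x² + x⁴ + ⋯ + x^(2^(h-1))`
(it lands in the prime subfield `F₂` when `|K| = 2^h`). -/
def Tr (h : ℕ) (x : K) : K := ∑ i ∈ Finset.range h, x ^ 2 ^ i

/-- `F₂`-independence of a tuple of elements of a field of characteristic two:
no nontrivial combination with coefficients `0`/`1` vanishes. -/
def F2Indep {n : ℕ} (v : Fin n → K) : Prop :=
  ∀ c : Fin n → K, (∀ i, c i = 0 ∨ c i = 1) → ∑ i, c i * v i = 0 → ∀ i, c i = 0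

/-- The `F₂`-span of a tuple of elements of a field of characteristic two. -/
def F2Span {n : ℕ} (v : Fin n → K) : Set K :=
  {x | ∃ c : Fin n → K, (∀ i, c i = 0 ∨ c i = 1) ∧ x = ∑ i, c i * v i}

/-- `α·S` for an additive subgroup `S` of the field. -/
def smulSub (α : K) (S : AddSubgroup K) : AddSubgroup K :=
  S.map (AddMonoidHom.mulLeft α)

/-- Points of `PG(2,q)`: one-dimensional subspaces of `K³`. -/
abbrev Pt (K : Type*) [Field K] := Projectivization K (Fin 3 → K)

/-- The point `(a : b : c)` of `PG(2,q)`. -/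
def pt3 (a b c : K) (habc : ¬(a = 0 ∧ b = 0 ∧ c = 0)) : Pt K :=
  Projectivization.mk K ![a, b, c] (fun h0 => habc
    ⟨by simpa using congrFun h0 0, by simpa using congrFun h0 1, by simpa using congrFun h0 2⟩)

/-- The point `(a : b)` of `PG(1,q)`. -/
def pt2 (a b : K) (hab : ¬(a = 0 ∧ b = 0)) : Projectivization K (Fin 2 → K) :=
  Projectivization.mk K ![a, b] (fun h0 => hab
    ⟨by simpa using congrFun h0 0, by simpa using congrFun h0 1⟩)

/-- An `F₂`-linear set of points of `PG(1,q)`: in characteristic two, the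
`F₂`-subspaces of `K²` are exactly its additive subgroups. -/
def IsF2Linear (T : Set (Projectivization K (Fin 2 → K))) : Prop :=
  ∃ U : AddSubgroup (Fin 2 → K),
    T = {P | ∃ u : Fin 2 → K, ∃ hu : u ≠ 0, u ∈ U ∧ Projectivization.mk K u hu = P}

/-- Lines of `PG(2,q)`: two-dimensional subspaces of `K³`. -/
def IsLine (L : Submodule K (Fin 3 → K)) : Prop := Module.finrank K L = 2

/-- Incidence of a point with a line. -/
def OnLine (P : Pt K) (L : Submodule K (Fin 3 → K)) : Prop := P.submodule ≤ L

/-- The number of points of `A` lying on the line `L`. -/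
def secantCount (A : Set (Pt K)) (L : Submodule K (Fin 3 → K)) : ℕ :=
  {P ∈ A | OnLine P L}.ncard

/-- A KM-arc of type `t`: `q+t` points meeting every line in `0`, `2` or `t` points. -/
def IsKMArc (q t : ℕ) (A : Set (Pt K)) : Prop :=
  A.ncard = q + t ∧ ∀ L : Submodule K (Fin 3 → K), IsLine L →
    secantCount A L = 0 ∨ secantCount A L = 2 ∨ secantCount A L = t

/-- The projectivity of `PG(2,q)` induced by an element of `GL(3,q)`. -/
def projMap (f : (Fin 3 → K) ≃ₗ[K] (Fin 3 → K)) : Pt K → Pt K :=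
  Projectivization.map f.toLinearMap f.injective

/-- `f` induces an elation with axis `L` and centre `R`: it fixes every point of `L`
and maps every line through `R` to itself. -/
def IsElation (f : (Fin 3 → K) ≃ₗ[K] (Fin 3 → K)) (L : Submodule K (Fin 3 → K))
    (R : Pt K) : Prop :=
  IsLine L ∧ OnLine R L ∧ (∀ P : Pt K, OnLine P L → projMap f P = P) ∧
    ∀ M : Submodule K (Fin 3 → K), IsLine M → OnLine R M →
      ∀ P : Pt K, OnLine P M → OnLine (projMap f P) M

/-- `f` induces an elation with axis `L` (for some centre on `L`). -/
def IsElationAxis (f : (Fin 3 → K) ≃ₗ[K] (Fin 3 → K)) (L : Submodule K (Fin 3 → K)) : Prop :=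
  ∃ R : Pt K, IsElation f L R

/-- The projectivity induced by `f` stabilises the point set `A`. -/
def Stabilises (f : (Fin 3 → K) ≃ₗ[K] (Fin 3 → K)) (A : Set (Pt K)) : Prop :=
  projMap f '' A = A

/-- `N` lies on every `t`-secant of `A` (i.e. `N` is the `t`-nucleus). -/
def IsNucleus (t : ℕ) (A : Set (Pt K)) (N : Pt K) : Prop :=
  ∀ L : Submodule K (Fin 3 → K), IsLine L → secantCount A L = t → OnLine N L

/-- An elation KM-arc of type `t` with `t`-nucleus `N` and elation line `linf`:
for every `t`-secant `L ≠ linf`, the group of elations with axis `linf` stabilising `A`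
acts transitively on `A ∩ L`. -/
def IsElationKMArc (q t : ℕ) (A : Set (Pt K)) (N : Pt K)
    (linf : Submodule K (Fin 3 → K)) : Prop :=
  IsKMArc q t A ∧ IsLine linf ∧ OnLine N linf ∧ IsNucleus t A N ∧
    ∀ L : Submodule K (Fin 3 → K), IsLine L → secantCount A L = t → L ≠ linf →
      ∀ P ∈ A, OnLine P L → ∀ Q ∈ A, OnLine Q L →
        ∃ f : (Fin 3 → K) ≃ₗ[K] (Fin 3 → K),
          IsElationAxis f linf ∧ Stabilises f A ∧ projMap f P = Q

/-- A translation KM-arc with translation line `l`: the group of elations with axis `l`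
stabilising `A` acts transitively on `A \ l`. -/
def IsTranslationKMArc (A : Set (Pt K)) (l : Submodule K (Fin 3 → K)) : Prop :=
  IsLine l ∧ ∀ P ∈ A, ¬OnLine P l → ∀ Q ∈ A, ¬OnLine Q l →
    ∃ f : (Fin 3 → K) ≃ₗ[K] (Fin 3 → K),
      IsElationAxis f l ∧ Stabilises f A ∧ projMap f P = Q

/-- The line `X = 0` of `PG(2,q)`. -/
def lineX0 (K : Type*) [Field K] : Submodule K (Fin 3 → K) :=
  LinearMap.ker (LinearMap.proj (R := K) (φ := fun _ : Fin 3 => K) 0)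

/-- The line `Y = aX` of `PG(2,q)`. -/
def lineYaX (a : K) : Submodule K (Fin 3 → K) where
  carrier := {v | v 1 = a * v 0}
  add_mem' := by
    intro v w hv hw
    simp only [Set.mem_setOf_eq, Pi.add_apply] at hv hw ⊢
    rw [hv, hw]; ring
  zero_mem' := by simp
  smul_mem' := by
    intro c v hv
    simp only [Set.mem_setOf_eq, Pi.smul_apply, smul_eq_mul] at hv ⊢
    rw [hv]; ring

/-- The point set of the `q/8`-construction (Theorem 4.4 of the paper), built from
`F₂`-independent `a 0, a 1, a 2` and coset representatives `b 0, b 1, b 2`. -/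
def q8Arc (h : ℕ) (a b : Fin 3 → K) : Set (Pt K) :=
  {P | ∃ x : K, (∀ i, Tr h (a i ^ 2 * x) = 0) ∧ P = pt3 0 1 x (by simp)}
    ∪ {P | ∃ l : Fin 3 → K, (∀ i, l i = 0 ∨ l i = 1) ∧ ∃ s : K, (∀ i, Tr h (a i * s) = 0) ∧
        P = pt3 1 (l 0 * a 0 + l 1 * a 1 + l 2 * a 2)
          ((l 0 + l 1 + l 2 + l 1 * l 2) * b 0 + (l 1 + l 2 + l 0 * l 2) * b 1
            + (l 2 + l 0 * l 1) * b 2 + s) (by simp)}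

/-- The point set of the `q/16`-construction (Theorem 5.2 of the paper). -/
def q16Arc (h : ℕ) (a : Fin 4 → K) (α : K) (b : Fin 3 → K) : Set (Pt K) :=
  {P | ∃ x : K, Tr h (a 0 * (a 0 + a 3) * x) = 0 ∧ Tr h (a 1 * (a 1 + a 3) * x) = 0 ∧
      Tr h (a 2 * (a 2 + a 3) * x) = 0 ∧ Tr h (a 3 * α * x) = 1 ∧ P = pt3 0 1 x (by simp)}
    ∪ {P | ∃ l : Fin 4 → K, (∀ i, l i = 0 ∨ l i = 1) ∧ ∃ s : K, (∀ i, Tr h (a i * s) = 0) ∧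
        P = pt3 1 (l 0 * a 0 + l 1 * a 1 + l 2 * a 2 + l 3 * a 3)
          ((l 0 + l 1 + l 2 + l 1 * l 2) * b 0 + (l 1 + l 2 + l 0 * l 2) * b 1
            + (l 2 + l 0 * l 1) * b 2 + s) (by simp)}

/-- The semilinear collineation of `PG(2,q)` sending the point spanned by `v`
to the point spanned by `M (ψ ∘ v)`. -/
def frobMap (ψ : K ≃+* K) (M : (Fin 3 → K) ≃ₗ[K] (Fin 3 → K)) (P : Pt K) : Pt K :=
  Projectivization.mk K (M fun i => ψ (P.rep i)) (by
    rw [LinearEquiv.map_ne_zero_iff]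
    intro h0
    apply P.rep_nonzero
    funext i
    have h2 : P.rep i = 0 := ψ.injective (by rw [map_zero]; exact congrFun h0 i)
    simpa using h2)

theorem core_f8 {K : Type*} [Field K] [CharP K 2] (a b c2 c3 c4 : K)
   (ha1 : a^3 = a+1 ∨ a^3=a^2+1)
   (hb0 : b ≠ 0) (hb1 : b ≠ 1) (hba : b ≠ a) (hba1 : b ≠ a+1)
   (h2 : c2 = a ∨ c2 = a+1) (h2' : b*c2=1 ∨ b*c2 = a ∨ b*c2=a+1)
   (h3 : a*c3=1 ∨ a*c3 = a ∨ a*c3=a+1)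
   (h3' : b*c3=1 ∨ b*c3 = a ∨ b*c3=a+1)
   (h4 : (a+1)*c4=1 ∨ (a+1)*c4 = a ∨ (a+1)*c4=a+1)
   (h4' : (b+1)*c4=1 ∨ (b+1)*c4 = a ∨ (b+1)*c4=a+1) :
   (1+b*c3+(b+1)*c4=0 ∧ a*c3+(a+1)*c4=0 ∧ a+c4*(a+b)=0) ∨
   (1+(b+1)*c4=0 ∧ c2+(a+1)*c4=0 ∧ a+c2*b+c4*(a+b)=0) ∨
   (b*c3+(b+1)*c4=0 ∧ c2+a*c3+(a+1)*c4=0 ∧ c2*b+c4*(a+b)=0) ∨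
   (1+b*c3=0 ∧ c2+a*c3=0 ∧ a+c2*b=0) := by
  have t : (2:K)=0 := by exact_mod_cast CharP.cast_eq_zero K 2
  have hB : b = a^2 ∨ b = a^2+1 ∨ b=a^2+a ∨ b=a^2+a+1 := by
    rcases ha1 with ha1|ha1 <;> rcases h2 with rfl|rfl <;> rcases h2' with h|h|h <;> grind
  rcases ha1 with ha1|ha1 <;> rcases hB with rfl|rfl|rfl|rfl
  · clear hb0 hb1 hba hba1
    have e2 : c2 = a := by
      clear h3 h3' h4 h4'
      rcases h2 with rfl|rfl <;> rcases h2' with h|h|h <;> grind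
    have e3 : c3 = a^2+1 := by
      clear h2 h2' h4 h4'
      rcases h3 with h|h|h <;> rcases h3' with g|g|g <;> grind
    have e4 : c4 = a^2+a := by
      clear h2 h2' h3 h3'
      rcases h4 with h|h|h <;> rcases h4' with g|g|g <;> grind
    clear h2 h2' h3 h3' h4 h4'
    subst e2 e3 e4
    refine Or.inl ⟨?_, ?_, ?_⟩ <;> grind
  · clear hb0 hb1 hba hba1
    have e2 : c2 = a := by
      clear h3 h3' h4 h4'
      rcases h2 with rfl|rfl <;> rcases h2' with h|h|h <;> grind
    have e3 : c3 = a^2 := by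
      clear h2 h2' h4 h4'
      rcases h3 with h|h|h <;> rcases h3' with g|g|g <;> grind
    have e4 : c4 = a^2+a+1 := by
      clear h2 h2' h3 h3'
      rcases h4 with h|h|h <;> rcases h4' with g|g|g <;> grind
    clear h2 h2' h3 h3' h4 h4'
    subst e2 e3 e4
    refine Or.inr (Or.inl ⟨?_, ?_, ?_⟩) <;> grind
  · clear hb0 hb1 hba hba1
    have e2 : c2 = a+1 := by
      clear h3 h3' h4 h4'
      rcases h2 with rfl|rfl <;> rcases h2' with h|h|h <;> grind
    have e3 : c3 = a^2+1 := by
      clear h2 h2' h4 h4'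
      rcases h3 with h|h|h <;> rcases h3' with g|g|g <;> grind
    have e4 : c4 = a^2+a+1 := by
      clear h2 h2' h3 h3'
      rcases h4 with h|h|h <;> rcases h4' with g|g|g <;> grind
    clear h2 h2' h3 h3' h4 h4'
    subst e2 e3 e4
    refine Or.inr (Or.inr (Or.inl ⟨?_, ?_, ?_⟩)) <;> grind
  · clear hb0 hb1 hba hba1
    have e2 : c2 = a+1 := by
      clear h3 h3' h4 h4'
      rcases h2 with rfl|rfl <;> rcases h2' with h|h|h <;> grind
    have e3 : c3 = a^2 := by
      clear h2 h2' h4 h4'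
      rcases h3 with h|h|h <;> rcases h3' with g|g|g <;> grind
    have e4 : c4 = a^2+a := by
      clear h2 h2' h3 h3'
      rcases h4 with h|h|h <;> rcases h4' with g|g|g <;> grind
    clear h2 h2' h3 h3' h4 h4'
    subst e2 e3 e4
    refine Or.inr (Or.inr (Or.inr ⟨?_, ?_, ?_⟩)) <;> grind
  · clear hb0 hb1 hba hba1
    have e2 : c2 = a+1 := by
      clear h3 h3' h4 h4'
      rcases h2 with rfl|rfl <;> rcases h2' with h|h|h <;> grind
    have e3 : c3 = a^2+a := by
      clear h2 h2' h4 h4'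
      rcases h3 with h|h|h <;> rcases h3' with g|g|g <;> grind
    have e4 : c4 = a^2 := by
      clear h2 h2' h3 h3'
      rcases h4 with h|h|h <;> rcases h4' with g|g|g <;> grind
    clear h2 h2' h3 h3' h4 h4'
    subst e2 e3 e4
    refine Or.inl ⟨?_, ?_, ?_⟩ <;> grind
  · clear hb0 hb1 hba hba1
    have e2 : c2 = a+1 := by
      clear h3 h3' h4 h4'
      rcases h2 with rfl|rfl <;> rcases h2' with h|h|h <;> grind
    have e3 : c3 = a^2+a+1 := by
      clear h2 h2' h4 h4'
      rcases h3 with h|h|h <;> rcases h3' with g|g|g <;> grind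
    have e4 : c4 = a^2+1 := by
      clear h2 h2' h3 h3'
      rcases h4 with h|h|h <;> rcases h4' with g|g|g <;> grind
    clear h2 h2' h3 h3' h4 h4'
    subst e2 e3 e4
    refine Or.inr (Or.inr (Or.inr ⟨?_, ?_, ?_⟩)) <;> grind
  · clear hb0 hb1 hba hba1
    have e2 : c2 = a := by
      clear h3 h3' h4 h4'
      rcases h2 with rfl|rfl <;> rcases h2' with h|h|h <;> grind
    have e3 : c3 = a^2+a := by
      clear h2 h2' h4 h4'
      rcases h3 with h|h|h <;> rcases h3' with g|g|g <;> grind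
    have e4 : c4 = a^2+1 := by
      clear h2 h2' h3 h3'
      rcases h4 with h|h|h <;> rcases h4' with g|g|g <;> grind
    clear h2 h2' h3 h3' h4 h4'
    subst e2 e3 e4
    refine Or.inr (Or.inl ⟨?_, ?_, ?_⟩) <;> grind
  · clear hb0 hb1 hba hba1
    have e2 : c2 = a := by
      clear h3 h3' h4 h4'
      rcases h2 with rfl|rfl <;> rcases h2' with h|h|h <;> grind
    have e3 : c3 = a^2+a+1 := by
      clear h2 h2' h4 h4'
      rcases h3 with h|h|h <;> rcases h3' with g|g|g <;> grind
    have e4 : c4 = a^2 := by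
      clear h2 h2' h3 h3'
      rcases h4 with h|h|h <;> rcases h4' with g|g|g <;> grind
    clear h2 h2' h3 h3' h4 h4'
    subst e2 e3 e4
    refine Or.inr (Or.inr (Or.inl ⟨?_, ?_, ?_⟩)) <;> grind

theorem Tr_add' {K : Type*} [Field K] [CharP K 2] (h : ℕ) (x y : K) :
    Tr h (x + y) = Tr h x + Tr h y := by
  haveI : Fact (Nat.Prime 2) := ⟨Nat.prime_two⟩
  simp only [Tr, ← Finset.sum_add_distrib]
  exact Finset.sum_congr rfl fun i _ => add_pow_char_pow x y 2 i

theorem Tr_zero' {K : Type*} [Field K] (h : ℕ) : Tr h (0 : K) = 0 := by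
  simp [Tr]

theorem perp_card {K : Type*} [Field K] [Fintype K] [CharP K 2] (h : ℕ) (hh : 2 ≤ h)
    (hcard : Fintype.card K = 2 ^ h) (S : AddSubgroup K) (hS : Nat.card S = 2 ^ h / 4) :
    Nat.card {z : K | ∀ s ∈ S, Tr h (z * s) = 0} = 4 := by
  haveI : Fact (Nat.Prime 2) := ⟨Nat.prime_two⟩
  letI : Algebra (ZMod 2) K := ZMod.algebra K 2
  have hfr : Module.finrank (ZMod 2) K = h := by
    have := Module.card_eq_pow_finrank (K := ZMod 2) (V := K)
    rw [hcard, ZMod.card] at this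
    exact (Nat.pow_right_injective le_rfl this).symm
  have hTr : ∀ x : K, algebraMap (ZMod 2) K (Algebra.trace (ZMod 2) K x) = Tr h x := by
    intro x
    rw [FiniteField.algebraMap_trace_eq_sum_pow, hfr]
    simp [Tr]
  let W : Submodule (ZMod 2) K := AddSubgroup.toZModSubmodule 2 S
  have hcW : Nat.card W = 2 ^ Module.finrank (ZMod 2) W := by
    have := Module.card_eq_pow_finrank (K := ZMod 2) (V := W)
    rwa [ZMod.card, ← Nat.card_eq_fintype_card] at this
  have hW : Module.finrank (ZMod 2) W = h - 2 := by
    have h1 : Nat.card W = 2 ^ h / 4 := hS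
    have h2 : 2 ^ h / 4 = 2 ^ (h - 2) := by
      obtain ⟨m, rfl⟩ := Nat.exists_eq_add_of_le hh
      rw [pow_add]; simp
    rw [hcW, h2] at h1
    exact Nat.pow_right_injective le_rfl h1
  have hO := LinearMap.BilinForm.finrank_orthogonal (traceForm_nondegenerate (ZMod 2) K) W
  rw [hfr, hW] at hO
  have hO2 : Module.finrank (ZMod 2) ((Algebra.traceForm (ZMod 2) K).orthogonal W) = 2 := by omega
  have hcO : Nat.card ((Algebra.traceForm (ZMod 2) K).orthogonal W) = 2 ^ 2 := by
    have := Module.card_eq_pow_finrank (K := ZMod 2)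
      (V := (Algebra.traceForm (ZMod 2) K).orthogonal W)
    rwa [ZMod.card, ← Nat.card_eq_fintype_card, hO2] at this
  have hset : {z : K | ∀ s ∈ S, Tr h (z * s) = 0}
      = ((Algebra.traceForm (ZMod 2) K).orthogonal W : Set K) := by
    ext z
    simp only [Set.mem_setOf_eq, SetLike.mem_coe, LinearMap.BilinForm.mem_orthogonal_iff]
    refine forall₂_congr fun s _ => ?_
    rw [← hTr, Algebra.traceForm_apply, mul_comm s z, map_eq_zero]
  rw [hset]
  exact hcO

theorem perp_mem {K : Type*} [Field K] [Fintype K] [CharP K 2] (h : ℕ) (hh : 2 ≤ h)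
    (hcard : Fintype.card K = 2 ^ h) (S : AddSubgroup K) (hS : Nat.card S = 2 ^ h / 4)
    (k a : K) (hk : k ≠ 0) (ha0 : a ≠ 0) (ha1 : a ≠ 1)
    (p1 : ∀ s ∈ S, Tr h (k * s) = 0) (p2 : ∀ s ∈ S, Tr h (a * k * s) = 0)
    (z : K) (hz : z ≠ 0) (pz : ∀ s ∈ S, Tr h (z * s) = 0) :
    z = k ∨ z = a * k ∨ z = (a + 1) * k := by
  have t : (2:K)=0 := by exact_mod_cast CharP.cast_eq_zero K 2
  have hc := perp_card h hh hcard S hS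
  have hak : a * k ≠ 0 := mul_ne_zero ha0 hk
  have n1 : a * k ≠ k := fun e => ha1 (mul_right_cancel₀ hk (by rw [e, one_mul]))
  have hsub : (({0, k, a * k, (a + 1) * k} : Finset K) : Set K)
      ⊆ {z : K | ∀ s ∈ S, Tr h (z * s) = 0} := by
    intro x hx s hs
    simp only [Finset.coe_insert, Finset.coe_singleton, Set.mem_insert_iff,
      Set.mem_singleton_iff] at hx
    rcases hx with rfl | rfl | rfl | rfl
    · rw [zero_mul, Tr_zero']
    · exact p1 s hs
    · exact p2 s hs
    · rw [show (a + 1) * k * s = a * k * s + k * s by ring, Tr_add', p1 s hs, p2 s hs, add_zero]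
  have hcF : ({0, k, a * k, (a + 1) * k} : Finset K).card = 4 := by
    have m1 : (a + 1) * k ≠ 0 := by
      intro e; apply n1; linear_combination e - k * t
    have m2 : (a + 1) * k ≠ k := by
      intro e; apply hak; linear_combination e
    have m3 : (a + 1) * k ≠ a * k := by
      intro e; apply hk; linear_combination e
    rw [Finset.card_insert_of_notMem, Finset.card_insert_of_notMem,
      Finset.card_insert_of_notMem, Finset.card_singleton]
    · simpa using m3.symm
    · simp only [Finset.mem_insert, Finset.mem_singleton, not_or]
      exact ⟨n1.symm, m2.symm⟩
    · simp only [Finset.mem_insert, Finset.mem_singleton, not_or]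
      exact ⟨hk.symm, hak.symm, m1.symm⟩
  have heq := Set.eq_of_subset_of_ncard_le hsub
    (by rw [Set.ncard_coe_finset, hcF, ← Nat.card_coe_set_eq, hc]) (Set.toFinite _)
  have hz' : z ∈ (({0, k, a * k, (a + 1) * k} : Finset K) : Set K) := by
    rw [heq]; exact pz
  simp only [Finset.coe_insert, Finset.coe_singleton, Set.mem_insert_iff,
      Set.mem_singleton_iff] at hz'
  tauto

theorem mem_smulSub' {K : Type*} [Field K] (a s : K) (S : AddSubgroup K) (hs : s ∈ S) :
    a * s ∈ smulSub a S := ⟨s, hs, rfl⟩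

theorem f8_cubic {K : Type*} [Field K] [CharP K 2] (a : K) (ha : a ^ 8 = a) (h0 : a ≠ 0)
    (h1 : a ≠ 1) : a^3 = a+1 ∨ a^3=a^2+1 := by
  have t : (2:K)=0 := by exact_mod_cast CharP.cast_eq_zero K 2
  have e : a * ((a - 1) * ((a^3 - (a+1)) * (a^3 - (a^2+1)))) = 0 := by grind
  rcases mul_eq_zero.1 e with e | e
  · exact absurd e h0
  rcases mul_eq_zero.1 e with e | e
  · exact absurd (sub_eq_zero.1 e) h1
  rcases mul_eq_zero.1 e with e | e
  · exact Or.inl (sub_eq_zero.1 e)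
  · exact Or.inr (sub_eq_zero.1 e)

/-- Lemma 3.8: the stated trace system has no solution `(X,Y) ∈ F_q²`. -/
theorem no_solutions
    {K : Type*} [Field K] [Fintype K] (h : ℕ) (h3 : 3 ∣ h)
    (hcard : Fintype.card K = 2 ^ h)
    (α β : K) (hα : α ^ 8 = α) (hβ : β ^ 8 = β)
    (hα0 : α ≠ 0) (hα1 : α ≠ 1) (hβ0 : β ≠ 0) (hβ1 : β ≠ 1)
    (hβα : β ≠ α) (hβα1 : β ≠ α + 1)
    (S : AddSubgroup K) (hS : Nat.card S = 2 ^ h / 4)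
    (k₁ k₂ k₃ k₄ : K)
    (hk0 : k₁ ≠ 0 ∧ k₂ ≠ 0 ∧ k₃ ≠ 0 ∧ k₄ ≠ 0)
    (hkdist : k₁ ≠ k₂ ∧ k₁ ≠ k₃ ∧ k₁ ≠ k₄ ∧ k₂ ≠ k₃ ∧ k₂ ≠ k₄ ∧ k₃ ≠ k₄)
    (e1 : ((S ⊔ smulSub α S : AddSubgroup K) : Set K) = {x : K | Tr h (k₁ * x) = 0})
    (e2 : ((S ⊔ smulSub β S : AddSubgroup K) : Set K) = {x : K | Tr h (k₂ * x) = 0})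
    (e3 : ((smulSub α S ⊔ smulSub β S : AddSubgroup K) : Set K) = {x : K | Tr h (k₃ * x) = 0})
    (e4 : ((smulSub (α + 1) S ⊔ smulSub (β + 1) S : AddSubgroup K) : Set K)
        = {x : K | Tr h (k₄ * x) = 0}) :
    ¬ ∃ X Y : K, Tr h (k₁ * (X + α)) = 1 ∧ Tr h (k₂ * (Y + β)) = 1 ∧
      Tr h (k₃ * (α * Y + β * X)) = 1 ∧
      Tr h (k₄ * ((α + β) + (β + 1) * X + (α + 1) * Y)) = 1 := by
  rintro ⟨X, Y, E1, E2, E3, E4⟩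
  haveI : Fact (Nat.Prime 2) := ⟨Nat.prime_two⟩
  haveI : CharP K 2 := charP_of_card_eq_prime_pow hcard
  have t : (2:K)=0 := by exact_mod_cast CharP.cast_eq_zero K 2
  have hh : 2 ≤ h := by
    have : h ≠ 0 := by
      rintro rfl
      have := Fintype.one_lt_card (α := K)
      simp [hcard] at this
    obtain ⟨m, rfl⟩ := h3
    omega
  obtain ⟨k10, k20, k30, k40⟩ := hk0
  have gen : ∀ (a b k : K), ((smulSub a S ⊔ smulSub b S : AddSubgroup K) : Set K)
      = {x : K | Tr h (k * x) = 0} →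
      (∀ s ∈ S, Tr h (a * k * s) = 0) ∧ (∀ s ∈ S, Tr h (b * k * s) = 0) := by
    intro a b k e
    constructor
    · intro s hs
      have : a * s ∈ ((smulSub a S ⊔ smulSub b S : AddSubgroup K) : Set K) :=
        (le_sup_left : smulSub a S ≤ _) (mem_smulSub' a s S hs)
      rw [e] at this
      have h2 : Tr h (k * (a * s)) = 0 := this
      rwa [show a * k * s = k * (a * s) by ring]
    · intro s hs
      have : b * s ∈ ((smulSub a S ⊔ smulSub b S : AddSubgroup K) : Set K) :=
        (le_sup_right : smulSub b S ≤ _) (mem_smulSub' b s S hs)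
      rw [e] at this
      have h2 : Tr h (k * (b * s)) = 0 := this
      rwa [show b * k * s = k * (b * s) by ring]
  have hone : smulSub 1 S = S := by
    ext x
    simp [smulSub, AddSubgroup.mem_map]
  obtain ⟨a1, b1⟩ := gen 1 α k₁ (by rw [hone]; exact e1)
  obtain ⟨a2, b2⟩ := gen 1 β k₂ (by rw [hone]; exact e2)
  obtain ⟨a3, b3⟩ := gen α β k₃ e3
  obtain ⟨a4, b4⟩ := gen (α + 1) (β + 1) k₄ e4
  rw [one_mul] at a1 a2
  have hα10 : α + 1 ≠ 0 := fun e => hα1 (by linear_combination e - t)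
  have hβ10 : β + 1 ≠ 0 := fun e => hβ1 (by linear_combination e - t)
  have M := perp_mem h hh hcard S hS k₁ α k10 hα0 hα1 a1 b1
  have m2 := M _ k20 a2
  have m2' := M _ (mul_ne_zero hβ0 k20) b2
  have m3 := M _ (mul_ne_zero hα0 k30) a3
  have m3' := M _ (mul_ne_zero hβ0 k30) b3
  have m4 := M _ (mul_ne_zero hα10 k40) a4
  have m4' := M _ (mul_ne_zero hβ10 k40) b4
  have sc : ∀ k : K, ∃ c, k = c * k₁ := fun k => ⟨k / k₁, by field_simp⟩
  obtain ⟨c2, hc2⟩ := sc k₂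
  obtain ⟨c3, hc3⟩ := sc k₃
  obtain ⟨c4, hc4⟩ := sc k₄
  have cancel : ∀ x y : K, x * k₁ = y * k₁ → x = y := fun x y e => mul_right_cancel₀ k10 e
  have tri : ∀ x u c : K, u = c * k₁ → (x * u = k₁ ∨ x * u = α * k₁ ∨ x * u = (α + 1) * k₁) →
      x * c = 1 ∨ x * c = α ∨ x * c = α + 1 := by
    rintro x u c rfl (e | e | e)
    · exact Or.inl (cancel _ _ (by linear_combination e))
    · exact Or.inr (Or.inl (cancel _ _ (by linear_combination e)))
    · exact Or.inr (Or.inr (cancel _ _ (by linear_combination e)))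
  have n2 : c2 = α ∨ c2 = α + 1 := by
    rcases m2 with e | e | e
    · exact absurd e.symm hkdist.1
    · exact Or.inl (cancel _ _ (by rw [← hc2, e]))
    · exact Or.inr (cancel _ _ (by rw [← hc2, e]))
  have key := core_f8 α β c2 c3 c4 (f8_cubic α hα hα0 hα1) hβ0 hβ1 hβα hβα1 n2
    (tri _ _ _ hc2 m2') (tri _ _ _ hc3 m3) (tri _ _ _ hc3 m3')
    (tri _ _ _ hc4 m4) (tri _ _ _ hc4 m4')
  have fin : ∀ x y z : K, Tr h x = 1 → Tr h y = 1 → Tr h z = 1 → x + y + z = 0 → False := by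
    intro x y z hx hy hz e
    have e' : Tr h (x + y + z) = 0 := by rw [e, Tr_zero']
    rw [Tr_add', Tr_add', hx, hy, hz] at e'
    exact one_ne_zero (α := K) (by linear_combination e' - t)
  rw [hc2] at E2
  rw [hc3] at E3
  rw [hc4] at E4
  rcases key with ⟨u, v, w⟩ | ⟨u, v, w⟩ | ⟨u, v, w⟩ | ⟨u, v, w⟩
  · exact fin _ _ _ E1 E3 E4 (by linear_combination k₁ * X * u + k₁ * Y * v + k₁ * w)
  · exact fin _ _ _ E1 E2 E4 (by linear_combination k₁ * X * u + k₁ * Y * v + k₁ * w)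
  · exact fin _ _ _ E2 E3 E4 (by linear_combination k₁ * X * u + k₁ * Y * v + k₁ * w)
  · exact fin _ _ _ E1 E2 E3 (by linear_combination k₁ * X * u + k₁ * Y * v + k₁ * w)
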